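/- Fix λ ∈ (0,1) and a ≥ 0 such that α := (1 + λ − 2a(1−λ))/2 > 0. Let (𝗎ₙ) be generated by the general momentum method, and let u ∈ C⁴([0,∞); ℝ^d) solve the modified (damped Hamiltonian) equation h α ü + (1−λ) u̇ = −∇Φ(u) with u(0) = 𝗎₀ and u̇(0) = 𝗎₀′ for an arbitrary 𝗎₀′ ∈ ℝ^d. Suppose h ≤ (1−λ)²/(2αB₁). Then for every T ≥ 0 there is a constant C = C(T) > 0, independent of h, such that sup over all n with 0 ≤ nh ≤ T of |u(nh) − 𝗎ₙ| ≤ C h. -/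

import Mathlib

theorem grad_lip {d : ℕ} (Φ : EuclideanSpace ℝ (Fin d) → ℝ) (B₁ : ℝ)
    (hΦ : ContDiff ℝ 3 Φ) (hbd₁ : ∀ x, ‖fderiv ℝ (gradient Φ) x‖ ≤ B₁)
    (x y : EuclideanSpace ℝ (Fin d)) : ‖gradient Φ y - gradient Φ x‖ ≤ B₁ * ‖y - x‖ := by
  have hd : Differentiable ℝ (gradient Φ) := by
    have h1 : ContDiff ℝ 2 (fderiv ℝ Φ) := hΦ.fderiv_right (by norm_num)
    have h2 : Differentiable ℝ (fderiv ℝ Φ) := h1.differentiable (by norm_num)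
    exact (InnerProductSpace.toDual ℝ (EuclideanSpace ℝ (Fin d))).symm.toContinuousLinearEquiv.differentiable.comp h2
  exact Convex.norm_image_sub_le_of_norm_fderiv_le (𝕜 := ℝ) (s := Set.univ) (fun z _ => hd z)
    (fun z _ => hbd₁ z) convex_univ (Set.mem_univ _) (Set.mem_univ _)

theorem vel_bound {E : Type*} [NormedAddCommGroup E] [NormedSpace ℝ E]
    (v F : ℝ → E) (k m B V : ℝ) (hk : 0 < k) (hm : 0 < m)
    (hF : ∀ t, ‖F t‖ ≤ B)
    (hv : ∀ t : ℝ, HasDerivAt v (k⁻¹ • (-(F t) - m • v t)) t)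
    (hV0 : ‖v 0‖ ≤ V) (hV : B ≤ m * V) (t : ℝ) (ht : 0 ≤ t) : ‖v t‖ ≤ V := by
  have he : ∀ s : ℝ, HasDerivAt (fun s => Real.exp (m / k * s)) (Real.exp (m / k * s) * (m / k)) s := by
    intro s
    simpa using ((hasDerivAt_id s).const_mul (m / k)).exp
  have hg : ∀ s : ℝ, HasDerivAt (fun s => Real.exp (m / k * s) • v s)
      (-(Real.exp (m / k * s) * k⁻¹) • F s) s := by
    intro s
    have := (he s).smul (hv s)
    refine this.congr_deriv ?_
    simp only [smul_sub, smul_smul, smul_neg, neg_smul]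
    rw [div_eq_mul_inv, show Real.exp (m * k⁻¹ * s) * (k⁻¹ * m) = Real.exp (m * k⁻¹ * s) * (m * k⁻¹) by ring]
    abel
  have key := image_norm_le_of_norm_deriv_right_le_deriv_boundary
    (a := 0) (b := t) (f := fun s => Real.exp (m / k * s) • v s)
    (f' := fun s => -(Real.exp (m / k * s) * k⁻¹) • F s)
    (B := fun s => Real.exp (m / k * s) * V) (B' := fun s => Real.exp (m / k * s) * (m / k) * V)
    (fun s _ => (hg s).continuousAt.continuousWithinAt)
    (fun s _ => (hg s).hasDerivWithinAt)
    (by simpa using hV0)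
    (fun s => (he s).mul_const V)
    (by
      intro s _
      rw [norm_smul, norm_neg, Real.norm_eq_abs, abs_of_nonneg (by positivity)]
      calc Real.exp (m / k * s) * k⁻¹ * ‖F s‖ ≤ Real.exp (m / k * s) * k⁻¹ * (m * V) := by
            gcongr; exact (hF s).trans hV
        _ = _ := by ring)
    (Set.right_mem_Icc.2 ht)
  simp only [norm_smul, Real.norm_eq_abs, Real.abs_exp] at key
  exact le_of_mul_le_mul_left key (Real.exp_pos _)

theorem gron (e : ℕ → ℝ) (h L M A : ℝ) (hh : 0 < h) (hL : 0 ≤ L) (hM : 0 ≤ M) (hA : 0 ≤ A)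
    (h0 : e 0 ≤ A) (hs : ∀ n, e (n+1) ≤ (1 + h * L) * e n + h * M) (n : ℕ) :
    e n ≤ Real.exp (L * (n * h)) * (A + n * h * M) := by
  induction n with
  | zero => simpa using h0
  | succ n ih =>
    have h1 : 1 + h * L ≤ Real.exp (L * h) := by
      have := Real.add_one_le_exp (L * h); linarith
    have h2 : (1:ℝ) ≤ Real.exp (L * (((n+1:ℕ):ℝ) * h)) := Real.one_le_exp (by positivity)
    have h3 : Real.exp (L * (((n+1:ℕ):ℝ) * h)) = Real.exp (L * h) * Real.exp (L * (n * h)) := by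
      rw [← Real.exp_add]; push_cast; congr 1; ring
    calc e (n+1) ≤ (1 + h * L) * e n + h * M := hs n
      _ ≤ (1 + h * L) * (Real.exp (L * (n * h)) * (A + n * h * M)) + h * M := by gcongr
      _ ≤ Real.exp (L * h) * (Real.exp (L * (n * h)) * (A + n * h * M)) + h * M := by gcongr
      _ = Real.exp (L * (((n+1:ℕ):ℝ) * h)) * (A + n * h * M) + 1 * (h * M) := by rw [h3]; ring
      _ ≤ Real.exp (L * (((n+1:ℕ):ℝ) * h)) * (A + n * h * M)
          + Real.exp (L * (((n+1:ℕ):ℝ) * h)) * (h * M) := by gcongr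
      _ = _ := by push_cast; ring

/-- Theorem 2 (convergence of momentum methods to the modified, damped-Hamiltonian equation):
with `α = (1 + λ - 2a(1-λ))/2 > 0` and `h ≤ (1-λ)²/(2αB₁)`, the momentum iterates stay
within `C·h` of the solution of `hα ü + (1-λ) u̇ = -∇Φ(u)`, `u(0) = u₀`, `u̇(0) = u₀'`,
with `C = C(T)` independent of `h`. -/
theorem momentum_converges_to_modified_equation
    {d : ℕ} (Φ : EuclideanSpace ℝ (Fin d) → ℝ)
    (B₀ B₁ B₂ : ℝ) (hB₀ : 0 < B₀) (hB₁ : 0 < B₁) (hB₂ : 0 < B₂)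
    (hΦ : ContDiff ℝ 3 Φ)
    (hbd₀ : ∀ x, ‖gradient Φ x‖ ≤ B₀)
    (hbd₁ : ∀ x, ‖fderiv ℝ (gradient Φ) x‖ ≤ B₁)
    (hbd₂ : ∀ x, ‖fderiv ℝ (fderiv ℝ (gradient Φ)) x‖ ≤ B₂)
    (lam a : ℝ) (hlam : lam ∈ Set.Ioo (0:ℝ) 1) (ha : 0 ≤ a)
    (α : ℝ) (hα_def : α = (1 + lam - 2*a*(1-lam))/2) (hα : 0 < α)
    (u₀ u₀' : EuclideanSpace ℝ (Fin d)) (T : ℝ) (hT : 0 ≤ T) :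
    ∃ C : ℝ, 0 < C ∧
      ∀ h : ℝ, 0 < h → h ≤ (1-lam)^2 / (2*α*B₁) →
      ∀ (u v : ℝ → EuclideanSpace ℝ (Fin d)) (uu : ℕ → EuclideanSpace ℝ (Fin d)),
        ContDiff ℝ 4 u →
        (∀ t : ℝ, HasDerivAt u (v t) t) →
        (∀ t : ℝ, HasDerivAt v ((h*α)⁻¹ • (-(gradient Φ (u t)) - (1-lam) • v t)) t) →
        u 0 = u₀ → v 0 = u₀' →
        uu 0 = u₀ →
        uu 1 = uu 0 - h • gradient Φ (uu 0) →
        (∀ n : ℕ, uu (n+2) = uu (n+1) + lam • (uu (n+1) - uu n)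
            - h • gradient Φ (uu (n+1) + a • (uu (n+1) - uu n))) →
        ∀ n : ℕ, (n : ℝ) * h ≤ T → ‖u ((n : ℝ) * h) - uu n‖ ≤ C * h := by
  obtain ⟨hl0, hl1⟩ := hlam
  have hm : 0 < 1 - lam := by linarith
  set m := 1 - lam with hmdef
  obtain ⟨D, hD⟩ : ∃ D, D = B₀ / m := ⟨_, rfl⟩
  have hDpos : 0 < D := by rw [hD]; positivity
  have hmD : m * D = B₀ := by rw [hD]; field_simp
  obtain ⟨V, hV⟩ : ∃ V, V = ‖u₀'‖ + D := ⟨_, rfl⟩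
  have hVpos : 0 < V := by rw [hV]; positivity
  obtain ⟨L, hL⟩ : ∃ L, L = B₁ / m := ⟨_, rfl⟩
  have hLpos : 0 < L := by rw [hL]; positivity
  obtain ⟨M, hM⟩ : ∃ M, M = B₁ * (V + (1 + a) * D) + L * (α * V + D) := ⟨_, rfl⟩
  have hMpos : 0 < M := by rw [hM]; positivity
  refine ⟨(Real.exp (L * T) * (α * V + B₀ + T * M) + α * V + D) / m, by positivity, ?_⟩
  intro h hh _ u v uu _ hu hv hu0 hv0 huu0 huu1 huu n hn
  have hvb : ∀ t, 0 ≤ t → ‖v t‖ ≤ V := fun t ht =>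
    vel_bound v (fun t => gradient Φ (u t)) (h * α) m B₀ V (by positivity) hm (fun t => hbd₀ _)
      hv (by rw [hv0, hV]; linarith) (by rw [hV, mul_add, hmD]; have : 0 ≤ m * ‖u₀'‖ := by positivity
                                         linarith) t ht
  have hdb : ∀ n, ‖uu (n+1) - uu n‖ ≤ h * D := by
    intro n
    induction n with
    | zero =>
      rw [zero_add, huu1, sub_sub_cancel_left, norm_neg, norm_smul, Real.norm_eq_abs, abs_of_pos hh]
      have : B₀ ≤ D := by rw [← hmD]; nlinarith
      gcongr
      exact (hbd₀ _).trans this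
    | succ n ih =>
      have e : uu (n+1+1) - uu (n+1) = lam • (uu (n+1) - uu n)
          - h • gradient Φ (uu (n+1) + a • (uu (n+1) - uu n)) := by
        rw [huu n]; abel
      rw [e]
      refine (norm_sub_le _ _).trans ?_
      rw [norm_smul, norm_smul, Real.norm_eq_abs, Real.norm_eq_abs, abs_of_pos hh, abs_of_pos hl0]
      calc _ ≤ lam * (h * D) + h * B₀ := by gcongr; exact hbd₀ _
        _ = h * D := by rw [← hmD, hmdef]; ring
  have hub : ∀ s t, 0 ≤ t → t ≤ s → ‖u s - u t‖ ≤ V * (s - t) := by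
    intro s t ht hts
    have := Convex.norm_image_sub_le_of_norm_hasDerivWithin_le (f := u) (f' := v) (s := Set.Ici 0)
      (C := V) (fun x _ => (hu x).hasDerivWithinAt) (fun x hx => hvb x hx) (convex_Ici 0)
      (x := t) (y := s) ht (ht.trans hts)
    rwa [Real.norm_eq_abs, abs_of_nonneg (by linarith)] at this
  set E : ℕ → EuclideanSpace ℝ (Fin d) := fun n =>
    ((h * α) • v (n * h) + m • u (n * h)) - (uu (n+1) - lam • uu n) with hE
  have herr : ∀ n : ℕ, m * ‖u (n * h) - uu n‖ ≤ ‖E n‖ + h * (α * V + D) := by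
    intro n
    have e : m • (u (n * h) - uu n) = E n - (h * α) • v (n * h) + (uu (n+1) - uu n) := by
      simp only [hE, hmdef]; module
    rw [← abs_of_pos hm, ← Real.norm_eq_abs, ← norm_smul, e]
    refine (norm_add_le _ _).trans ?_
    have h1 := norm_sub_le (E n) ((h * α) • v (n * h))
    have h2 : ‖(h * α) • v (n * h)‖ ≤ h * α * V := by
      rw [norm_smul, Real.norm_eq_abs, abs_of_pos (by positivity)]
      gcongr
      exact hvb _ (by positivity)
    have h3 := hdb n
    linarith
  have hstep : ∀ n, ‖E (n+1)‖ ≤ (1 + h * L) * ‖E n‖ + h * (h * M) := by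
    intro n
    set y := uu (n+1) + a • (uu (n+1) - uu n) with hy
    set g : ℝ → EuclideanSpace ℝ (Fin d) := fun s => (h * α) • v s + m • u s + s • gradient Φ y with hg
    have hgd : ∀ s, HasDerivAt g (gradient Φ y - gradient Φ (u s)) s := by
      intro s
      have := (((hv s).const_smul (h * α)).add ((hu s).const_smul m)).add
        ((hasDerivAt_id s).smul_const (gradient Φ y))
      refine this.congr_deriv ?_
      rw [smul_smul, mul_inv_cancel₀ (by positivity)]
      module
    have hEe : E (n+1) = E n + (g ((n+1:ℕ) * h) - g (n * h)) := by
      simp only [hE, hg]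
      rw [huu n]
      push_cast
      module
    have hy' : ‖y - uu n‖ ≤ (1 + a) * (h * D) := by
      have : y - uu n = (1 + a) • (uu (n+1) - uu n) := by rw [hy]; module
      rw [this, norm_smul, Real.norm_eq_abs, abs_of_nonneg (by positivity)]
      gcongr
      exact hdb n
    have hn0 : 0 ≤ (n:ℝ) * h := by positivity
    have hnn : ((n+1:ℕ):ℝ) * h = n * h + h := by push_cast; ring
    obtain ⟨R, hR⟩ : ∃ R, R = B₁ * (V * h + ‖u (n * h) - uu n‖ + (1 + a) * (h * D)) := ⟨_, rfl⟩
    have hb : ∀ s ∈ Set.Icc ((n:ℝ) * h) (n * h + h), ‖gradient Φ y - gradient Φ (u s)‖ ≤ R := by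
      intro s hs
      refine (grad_lip Φ B₁ hΦ hbd₁ _ _).trans ?_
      rw [hR]
      gcongr
      have e : y - u s = (y - uu n) - (u (n * h) - uu n) - (u s - u (n * h)) := by abel
      rw [e]
      have h1 := norm_sub_le ((y - uu n) - (u (n * h) - uu n)) (u s - u (n * h))
      have h2 := norm_sub_le (y - uu n) (u (n * h) - uu n)
      have h3 := hub s (n * h) hn0 hs.1
      have h4 : V * (s - n * h) ≤ V * h := by gcongr; linarith [hs.2]
      linarith
    have hgi := Convex.norm_image_sub_le_of_norm_hasDerivWithin_le (f := g)
      (s := Set.Icc ((n:ℝ) * h) (n * h + h)) (C := R)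
      (fun x _ => (hgd x).hasDerivWithinAt) hb (convex_Icc _ _)
      (x := n * h) (y := n * h + h) ⟨le_rfl, by linarith⟩ ⟨by linarith, le_rfl⟩
    rw [add_sub_cancel_left, Real.norm_eq_abs, abs_of_pos hh] at hgi
    rw [hEe, hnn]
    have h5 := norm_add_le (E n) (g (n * h + h) - g (n * h))
    have h6 : B₁ * ‖u (n * h) - uu n‖ ≤ L * (‖E n‖ + h * (α * V + D)) := by
      have e : B₁ = L * m := by rw [hL]; field_simp
      rw [e, mul_assoc]
      exact mul_le_mul_of_nonneg_left (herr n) hLpos.le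
    have h7 : R ≤ L * ‖E n‖ + h * M := by
      rw [hR, hM]; linarith
    have h8 : R * h ≤ (L * ‖E n‖ + h * M) * h := by gcongr
    linarith
  have hE0 : ‖E 0‖ ≤ h * (α * V + B₀) := by
    have e : E 0 = (h * α) • u₀' + h • gradient Φ u₀ := by
      simp only [hE, hmdef]
      rw [zero_add, huu1, huu0, Nat.cast_zero, zero_mul, hu0, hv0]
      module
    rw [e]
    refine (norm_add_le _ _).trans ?_
    rw [norm_smul, norm_smul, Real.norm_eq_abs, Real.norm_eq_abs, abs_of_pos hh, abs_of_pos (by positivity)]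
    have h1 : h * α * ‖u₀'‖ ≤ h * α * V := by gcongr; rw [hV]; linarith
    have h2 : h * ‖gradient Φ u₀‖ ≤ h * B₀ := by gcongr; exact hbd₀ _
    linarith
  have hgr := gron (fun n => ‖E n‖) h L (h * M) (h * (α * V + B₀)) hh hLpos.le (by positivity)
    (by positivity) hE0 hstep n
  have hfin : ‖E n‖ ≤ Real.exp (L * T) * (h * (α * V + B₀) + T * (h * M)) := by
    refine hgr.trans ?_
    gcongr
  have := herr n
  rw [div_mul_eq_mul_div, le_div_iff₀ hm]
  linarith
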